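/- Let k be a field, let B and A be finite type k-algebras, and let f : B → A be a k-algebra homomorphism. Let p be a maximal ideal of A and let q = f⁻¹(p). Assume that f(q)·A_p = p·A_p and that the induced residue field map B/q → A/p is an isomorphism. Then there exist a finitely presented B-algebra C, a surjective B-algebra homomorphism π : C → A, and an element c ∈ C with π(c) ∉ p, such that the localization C_c is an étale B-algebra. -/

import Mathlib

/-!
Choose `x₁, …, xₙ` generating `A` over `B`. That `A` is unramified at `p` means `Ω[A⁄B]` vanishes
at `p`, so every `dxᵢ` is killed by some `sᵢ ∉ p`. By the conormal sequence of `B[X₁, …, Xₙ] → A`,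
the relation `sᵢ dxᵢ = 0` comes from a polynomial `gᵢ` in the kernel with `∂gᵢ/∂Xⱼ = sᵢ δᵢⱼ` in `A`.
Hence the Jacobian determinant of `g₁, …, gₙ` maps to `∏ sᵢ ∉ p`, and
`C = B[X₁, …, Xₙ] / (g₁, …, gₙ)` is étale over `B` wherever that determinant is invertible.
-/

universe u v

open MvPolynomial KaehlerDifferential

section Jacobian

variable {R S T ι σ : Type*} [CommRing R] [CommRing S] [CommRing T] [Algebra R S]

theorem isStandardSmoothOfRelativeDimension_away_jacobian [Algebra R T] [Algebra S T]
    [IsScalarTower R S T] [Finite ι] [Finite σ]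
    (P : Algebra.PreSubmersivePresentation R S ι σ) [IsLocalization.Away P.jacobian T] :
    Algebra.IsStandardSmoothOfRelativeDimension P.dimension R T := by
  let Q := Algebra.PreSubmersivePresentation.localizationAway T P.jacobian
  let QP : Algebra.SubmersivePresentation R T (Unit ⊕ ι) (Unit ⊕ σ) :=
    { Q.comp P with
      jacobian_isUnit := by
        have hunit := IsLocalization.Away.algebraMap_isUnit (S := T) P.jacobian
        rw [Algebra.PreSubmersivePresentation.comp_jacobian_eq_jacobian_smul_jacobian,
          Algebra.smul_def, Algebra.PreSubmersivePresentation.localizationAway_jacobian]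
        exact hunit.mul hunit }
  have hQ : Q.dimension = 0 := Algebra.Presentation.localizationAway_dimension_zero P.jacobian
  have hQP : QP.dimension = Q.dimension + P.dimension :=
    Q.dimension_comp_eq_dimension_add_dimension P
  exact QP.isStandardSmoothOfRelativeDimension (by rw [hQP, hQ, zero_add])

theorem jacobian_naive_id [Fintype σ] [DecidableEq σ] (g : σ → MvPolynomial σ R) :
    (Algebra.PreSubmersivePresentation.naive (v := g) id Function.injective_id).jacobian =
      Ideal.Quotient.mk (Ideal.span (Set.range g)) (Matrix.of fun i j ↦ pderiv i (g j)).det := by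
  rw [Algebra.PreSubmersivePresentation.jacobian_eq_jacobiMatrix_det]
  congr 2
  ext1 i j
  exact Algebra.PreSubmersivePresentation.jacobiMatrix_naive ..

theorem etale_away_det_pderiv [Fintype σ] [DecidableEq σ] (g : σ → MvPolynomial σ R) :
    Algebra.Etale R (Localization.Away (Ideal.Quotient.mk (Ideal.span (Set.range g))
      (Matrix.of fun i j ↦ pderiv i (g j)).det)) := by
  rw [← jacobian_naive_id g, Algebra.Etale.iff_isStandardSmoothOfRelativeDimension_zero]
  set P := Algebra.PreSubmersivePresentation.naive (v := g) id Function.injective_id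
  have hdim : P.dimension = 0 := Nat.sub_self _
  exact hdim ▸ isStandardSmoothOfRelativeDimension_away_jacobian P

end Jacobian

section Relations

variable {R S ι : Type*} [CommRing R] [CommRing S] [Algebra R S]

theorem exists_mem_ker_aeval_pderiv_eq (P : Algebra.Generators R S ι) {c : ι →₀ S}
    (hc : Finsupp.linearCombination S (fun i ↦ D R S (P.val i)) c = 0) :
    ∃ g ∈ P.ker, ∀ i, aeval P.val (pderiv i g) = c i := by
  have hker : P.toExtension.toKaehler (P.cotangentSpaceBasis.repr.symm c) = 0 := by
    rw [← hc, Module.Basis.repr_symm_apply, Finsupp.apply_linearCombination]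
    simp [Function.comp_def]
  obtain ⟨y, hy⟩ := (Algebra.Extension.exact_cotangentComplex_toKaehler _).mp hker
  obtain ⟨⟨g, hg⟩, rfl⟩ := Algebra.Extension.Cotangent.mk_surjective y
  refine ⟨g, hg, fun i ↦ ?_⟩
  rw [Algebra.Extension.cotangentComplex_mk] at hy
  rw [← P.cotangentSpaceBasis_repr_one_tmul]
  exact DFunLike.congr_fun (P.cotangentSpaceBasis.repr.eq_symm_apply.mp hy) i

end Relations

section Unramified

variable {R S : Type*} [CommRing R] [CommRing S] [Algebra R S]

theorem exists_notMem_smul_eq_zero_of_isUnramifiedAt (p : Ideal S) [p.IsPrime]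
    [hp : Algebra.IsUnramifiedAt R p] (ω : Ω[S⁄R]) : ∃ s ∉ p, s • ω = 0 := by
  have hsupp : ⟨p, ‹_›⟩ ∈ (Module.support S Ω[S⁄R])ᶜ :=
    Algebra.unramifiedLocus_eq_compl_support (R := R) (A := S) ▸ hp
  exact Module.notMem_support_iff'.mp hsupp ω

theorem exists_det_aeval_pderiv_notMem {σ : Type*} [Fintype σ] [DecidableEq σ]
    (P : Algebra.Generators R S σ) (p : Ideal S) [p.IsPrime] [Algebra.IsUnramifiedAt R p] :
    ∃ g : σ → MvPolynomial σ R, (∀ i, g i ∈ P.ker) ∧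
      aeval P.val (Matrix.of fun i j ↦ pderiv i (g j)).det ∉ p := by
  choose s hsp hs using fun i ↦
    exists_notMem_smul_eq_zero_of_isUnramifiedAt p (D R S (P.val i))
  choose g hgker hg using fun j ↦
    exists_mem_ker_aeval_pderiv_eq P (c := Finsupp.single j (s j)) (by simp [hs])
  have hdiag : (aeval P.val).mapMatrix (Matrix.of fun i j ↦ pderiv i (g j)) =
      Matrix.diagonal s := by
    ext i j
    rcases eq_or_ne i j with rfl | hij
    · simp [hg]
    · simp [hg, hij]
  refine ⟨g, hgker, ?_⟩
  rw [AlgHom.map_det, hdiag, Matrix.det_diagonal, Ideal.IsPrime.prod_mem_iff]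
  simpa using hsp

theorem algebraMap_residueField_surjective_of_quotient {q : Ideal R} {p : Ideal S}
    [q.IsPrime] [p.IsPrime] [p.LiesOver q]
    (h : Function.Surjective (algebraMap (R ⧸ q) (S ⧸ p)))
    [Algebra (Localization.AtPrime q) (Localization.AtPrime p)]
    [Localization.AtPrime.IsLiesOverAlgebra q p] :
    Function.Surjective (algebraMap q.ResidueField p.ResidueField) := by
  have hcomm (r : R ⧸ q) : algebraMap q.ResidueField p.ResidueField (algebraMap _ _ r) =
      algebraMap (S ⧸ p) p.ResidueField (algebraMap _ _ r) := by
    obtain ⟨r, rfl⟩ := Ideal.Quotient.mk_surjective r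
    simp [← IsScalarTower.algebraMap_apply]
  intro x
  obtain ⟨a, b, -, rfl⟩ := IsFractionRing.div_surjective (A := S ⧸ p) x
  obtain ⟨a, rfl⟩ := h a
  obtain ⟨b, rfl⟩ := h b
  exact ⟨algebraMap _ _ a / algebraMap _ _ b, by rw [map_div₀, hcomm, hcomm]⟩

theorem isUnramifiedAt_of_map_eq_of_quotient_surjective [Algebra.EssFiniteType R S]
    (q : Ideal R) (p : Ideal S) [q.IsPrime] [p.IsPrime] [p.LiesOver q]
    (hmap : q.map (algebraMap R (Localization.AtPrime p)) =
      IsLocalRing.maximalIdeal (Localization.AtPrime p))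
    (hres : Function.Surjective (algebraMap (R ⧸ q) (S ⧸ p))) :
    Algebra.IsUnramifiedAt R p := by
  let _ := Localization.AtPrime.algebraOfLiesOver q p
  refine (Algebra.isUnramifiedAt_iff_map_eq R q p).mpr ⟨⟨fun x ↦ ?_⟩, hmap⟩
  obtain ⟨y, rfl⟩ := algebraMap_residueField_surjective_of_quotient hres x
  exact isSeparable_algebraMap y

end Unramified

theorem exists_etale_chart_of_unramified_trivial_residue_general
    {B : Type u} {A : Type v} [CommRing B] [CommRing A] [Algebra B A] [Algebra.FiniteType B A]
    (p : Ideal A) [p.IsPrime] [Algebra.IsUnramifiedAt B p] :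
    ∃ (C : Type u) (_ : CommRing C) (_ : Algebra B C),
      Algebra.FinitePresentation B C ∧
      ∃ π : C →+* A, π.comp (algebraMap B C) = algebraMap B A ∧
        Function.Surjective π ∧
        ∃ c : C, π c ∉ p ∧ Algebra.Etale B (Localization.Away c) := by
  obtain ⟨n, ⟨P⟩⟩ := Algebra.FiniteType.iff_exists_generators.mp ‹Algebra.FiniteType B A›
  obtain ⟨g, hgker, hdet⟩ := exists_det_aeval_pderiv_notMem P p
  have hle : Ideal.span (Set.range g) ≤ RingHom.ker (aeval P.val) :=
    P.ker_eq_ker_aeval_val ▸ Ideal.span_le.mpr (Set.range_subset_iff.mpr hgker)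
  let π : (MvPolynomial (Fin n) B ⧸ Ideal.span (Set.range g)) →ₐ[B] A :=
    Ideal.Quotient.liftₐ _ (aeval P.val) hle
  refine ⟨MvPolynomial (Fin n) B ⧸ Ideal.span (Set.range g), inferInstance, inferInstance,
    .quotient (Submodule.fg_span (Set.finite_range g)), π, π.comp_algebraMap,
    Ideal.Quotient.lift_surjective_of_surjective _ hle P.aeval_val_surjective,
    Ideal.Quotient.mk _ (Matrix.of fun i j ↦ pderiv i (g j)).det, hdet, etale_away_det_pderiv g⟩

/-- Let `k` be a field, `B`, `A` finite type `k`-algebras, `f : B → A` a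
`k`-algebra homomorphism, `p` a maximal ideal of `A`, `q = f⁻¹(p)`. Assume `f(q)·A_p = p·A_p`
and that the residue field map `B/q → A/p` is an isomorphism. Then there exist a finitely
presented `B`-algebra `C`, a surjective `B`-algebra homomorphism `π : C → A` and `c ∈ C` with
`π c ∉ p` such that the localization `C_c` is an étale `B`-algebra. -/
theorem exists_etale_chart_of_unramified_trivial_residue
    (k : Type) [Field k] (B A : Type) [CommRing B] [CommRing A]
    [Algebra k B] [Algebra k A] [Algebra.FiniteType k B] [Algebra.FiniteType k A]
    (f : B →ₐ[k] A) (p : Ideal A) [p.IsMaximal]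
    (hloc : ((p.comap f.toRingHom).map f.toRingHom).map
        (algebraMap A (Localization.AtPrime p)) =
      p.map (algebraMap A (Localization.AtPrime p)))
    (hres : Function.Bijective (Ideal.quotientMap p f.toRingHom le_rfl)) :
    ∃ (C : Type) (_ : CommRing C) (_ : Algebra B C),
      Algebra.FinitePresentation B C ∧
      ∃ π : C →+* A, π.comp (algebraMap B C) = f.toRingHom ∧
        Function.Surjective π ∧
        ∃ c : C, π c ∉ p ∧ Algebra.Etale B (Localization.Away c) := by
  algebraize [f.toRingHom]
  have : Algebra.FiniteType B A := .of_restrictScalars_finiteType k B A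
  have : Algebra.IsUnramifiedAt B p :=
    isUnramifiedAt_of_map_eq_of_quotient_surjective (p.under B) p
      (by rwa [Ideal.map_map, Localization.AtPrime.map_eq_maximalIdeal] at hloc) hres.surjective
  exact exists_etale_chart_of_unramified_trivial_residue_general p
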